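/- arXiv:1003.0887 — 3 statements merged into one kernel-verified Lean document; each statement's English description precedes it below -/
import Mathlib

section
/- Let ψ be a continuous positive definite function on the d-torus T^d with Fourier representation ψ(x) = ∑_{n∈ℤ^d} A_ψ(n) e^{i xᵀn}, where A_ψ(n) ≥ 0, A_ψ(−n) = A_ψ(n) and ∑_{n∈ℤ^d} A_ψ(n) < ∞, and let k(x,y) = ψ((x − y) mod 2π). Then k is c-universal if and only if A_ψ(n) > 0 for all n ∈ ℤ^d. -/
open MeasureTheory Filter Topology RealInnerProductSpace

/-- The character `x ↦ e^{i xᵀn}` on the `d`-torus `(ℝ/2πℤ)^d`, for a frequency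
`n ∈ ℤ^d`; here `AddCircle.toCircle θ = e^{iθ}` on `ℝ/2πℤ`. -/
noncomputable def torusChar {d : ℕ} (n : Fin d → ℤ)
    (x : Fin d → AddCircle (2 * Real.pi)) : ℂ :=
  ∏ j, (AddCircle.toCircle (x j) : ℂ) ^ (n j)

/-!
The characters diagonalize convolution with `ψ`: for every `c : ℂ`, the function `w = Re (c χₙ)`
satisfies `∫ w y * ⟪Φ x, Φ y⟫ dy = A n * w x`, that is, `v = ∫ w y • Φ y dy` represents `A n • w`
in the RKHS. If no `A n` vanishes, the RKHS thus contains all real trigonometric polynomials, which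
are dense by Stone–Weierstrass. If `A n = 0`, then `‖v‖² = ∫ w (A n • w) = 0`, so every RKHS
function is orthogonal to `w` in `L²`, and `w` itself is not a uniform limit of such functions.
-/

section FeatureMap

variable {X H : Type*} [TopologicalSpace X] [NormedAddCommGroup H]

/-- The feature map `Φ` with values in the Hilbert space completion of its feature space. -/
noncomputable def completedFeatureMap (Φ : C(X, H)) : C(X, UniformSpace.Completion H) :=
  ⟨fun x => Φ x, (UniformSpace.Completion.continuous_coe H).comp Φ.continuous⟩

@[simp]
lemma completedFeatureMap_apply (Φ : C(X, H)) (x : X) : completedFeatureMap Φ x = Φ x := rfl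

variable [InnerProductSpace ℝ H]

/-- `c`-universality of the kernel `⟪Φ x, Φ y⟫` on `X`, whose RKHS is the space of functions
`x ↦ ⟪f, Φ x⟫` when `H` is complete. -/
def IsCUniversal (Φ : X → H) : Prop :=
  ∀ (g : C(X, ℝ)) (ε : ℝ), 0 < ε → ∃ f : H, ∀ x, |⟪f, Φ x⟫ - g x| ≤ ε

/-- The operator from the feature space `H` to `C(X, ℝ)` whose range consists of the functions
`x ↦ ⟪f, Φ x⟫` realized by the feature map `Φ`. -/
noncomputable def featureCLM (Φ : C(X, H)) : H →L[ℝ] C(X, ℝ) where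
  toFun f := ⟨fun x => ⟪f, Φ x⟫, by fun_prop⟩
  map_add' f₁ f₂ := by ext x; exact inner_add_left f₁ f₂ (Φ x)
  map_smul' r f := by ext x; exact real_inner_smul_left f (Φ x) r
  cont := (ContinuousMap.curry ⟨fun p : H × X => ⟪p.1, Φ p.2⟫, by fun_prop⟩).continuous

@[simp]
lemma featureCLM_apply (Φ : C(X, H)) (f : H) (x : X) : featureCLM Φ f x = ⟪f, Φ x⟫ := rfl

lemma isCUniversal_iff_denseRange_featureCLM [CompactSpace X] (Φ : C(X, H)) :
    IsCUniversal Φ ↔ DenseRange (featureCLM Φ) := by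
  simp only [IsCUniversal, DenseRange, Dense,
    mem_closure_iff_nhds_basis Metric.nhds_basis_closedBall, Set.exists_range_iff]
  refine forall_congr' fun g => forall₂_congr fun ε hε => exists_congr fun f => ?_
  simp [Metric.mem_closedBall, ContinuousMap.dist_le hε.le, Real.dist_eq]

lemma continuous_of_continuous_inner {Φ : X → H}
    (hΦ : Continuous fun p : X × X => ⟪Φ p.1, Φ p.2⟫) : Continuous Φ := by
  refine continuous_iff_continuousAt.mpr fun a => tendsto_iff_norm_sub_tendsto_zero.mpr ?_
  have hdiag : Continuous fun x => ⟪Φ x, Φ x⟫ := hΦ.comp (continuous_id.prodMk continuous_id)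
  have hslice : Continuous fun x => ⟪Φ x, Φ a⟫ := hΦ.comp (continuous_id.prodMk continuous_const)
  have hsq : Continuous fun x => ‖Φ x - Φ a‖ ^ 2 := by
    simp only [← real_inner_self_eq_norm_sq, real_inner_sub_sub_self]
    fun_prop
  simpa using (hsq.sqrt.tendsto a)

lemma denseRange_featureCLM_completedFeatureMap (Φ : C(X, H)) :
    DenseRange (featureCLM (completedFeatureMap Φ)) ↔ DenseRange (featureCLM Φ) := by
  have hcoe : featureCLM (completedFeatureMap Φ) ∘ (↑) = featureCLM Φ := by
    funext f
    ext x
    exact UniformSpace.Completion.inner_coe f (Φ x)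
  rw [← hcoe]
  exact ⟨fun h => h.comp UniformSpace.Completion.denseRange_coe (featureCLM _).continuous,
    DenseRange.of_comp⟩

end FeatureMap

section IntegralPairing

variable {X 𝕜 : Type*} [TopologicalSpace X] [CompactSpace X] [MeasurableSpace X]
  [OpensMeasurableSpace X] (μ : Measure X) [IsFiniteMeasureOnCompacts μ]

lemma integrable_of_continuous {E : Type*} [NormedAddCommGroup E] {f : X → E}
    (hf : Continuous f) : Integrable f μ :=
  hf.integrable_of_hasCompactSupport (.of_compactSpace f)

/-- The functional `g ↦ ∫ w g dμ` on `C(X, 𝕜)`. -/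
noncomputable def integralMulCLM [RCLike 𝕜] (w : C(X, 𝕜)) : C(X, 𝕜) →L[𝕜] 𝕜 where
  toFun g := ∫ x, w x * g x ∂μ
  map_add' g₁ g₂ := by
    simp only [ContinuousMap.add_apply, mul_add]
    exact integral_add (integrable_of_continuous μ (by fun_prop))
      (integrable_of_continuous μ (by fun_prop))
  map_smul' c g := by
    simp only [ContinuousMap.smul_apply, smul_eq_mul, mul_left_comm _ c, integral_const_mul,
      RingHom.id_apply]
  cont := continuousOn_univ.mp <| continuousOn_integral_of_compact_support isCompact_univ
    (Continuous.continuousOn (by fun_prop)) (by simp)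

@[simp]
lemma integralMulCLM_apply [RCLike 𝕜] (w g : C(X, 𝕜)) :
    integralMulCLM μ w g = ∫ x, w x * g x ∂μ := rfl

lemma integralMulCLM_self_pos [μ.IsOpenPosMeasure] {w : C(X, ℝ)} (hw : w ≠ 0) :
    0 < integralMulCLM μ w w := by
  obtain ⟨x, hx⟩ := DFunLike.ne_iff.mp hw
  exact (w.continuous.mul w.continuous).integral_pos_of_hasCompactSupport_nonneg_nonzero
    (.of_compactSpace _) (fun y => mul_self_nonneg (w y)) (mul_self_ne_zero.mpr hx)

variable {H : Type*} [NormedAddCommGroup H] [InnerProductSpace ℝ H]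

/-- `w` is an eigenfunction, with eigenvalue `a`, of the integral operator on `C(X, ℝ)` with
kernel `⟪Φ x, Φ y⟫`. -/
def IsKernelEigenfunction (Φ : C(X, H)) (a : ℝ) (w : C(X, ℝ)) : Prop :=
  ∀ x, ∫ y, w y * ⟪Φ x, Φ y⟫ ∂μ = a * w x

variable [CompleteSpace H]

lemma inner_integral_smul_featureMap (Φ : C(X, H)) (w : C(X, ℝ)) (f : H) :
    ⟪f, ∫ y, w y • Φ y ∂μ⟫ = integralMulCLM μ w (featureCLM Φ f) := by
  rw [← integral_inner (integrable_of_continuous μ (by fun_prop))]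
  simp only [real_inner_smul_right, integralMulCLM_apply, featureCLM_apply]

variable {μ} {Φ : C(X, H)} {a : ℝ} {w : C(X, ℝ)}

lemma featureCLM_integral_smul (hw : IsKernelEigenfunction μ Φ a w) :
    featureCLM Φ (∫ y, w y • Φ y ∂μ) = a • w := by
  ext x
  rw [featureCLM_apply, real_inner_comm, inner_integral_smul_featureMap]
  exact hw x

lemma mem_range_featureCLM_of_ne_zero (hw : IsKernelEigenfunction μ Φ a w) (ha : a ≠ 0) :
    w ∈ (featureCLM Φ).range :=
  ⟨a⁻¹ • ∫ y, w y • Φ y ∂μ, by simp [featureCLM_integral_smul hw, inv_smul_smul₀ ha]⟩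

lemma integralMulCLM_featureCLM_eq_zero (hw : IsKernelEigenfunction μ Φ 0 w) (f : H) :
    integralMulCLM μ w (featureCLM Φ f) = 0 := by
  have hzero : ∫ y, w y • Φ y ∂μ = 0 := by
    rw [← inner_self_eq_zero (𝕜 := ℝ), inner_integral_smul_featureMap,
      featureCLM_integral_smul hw, zero_smul, map_zero]
  rw [← inner_integral_smul_featureMap, hzero, inner_zero_right]

lemma eigenvalue_ne_zero_of_denseRange [μ.IsOpenPosMeasure]
    (hΦ : DenseRange (featureCLM Φ)) (hw : IsKernelEigenfunction μ Φ a w) (hw₀ : w ≠ 0) :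
    a ≠ 0 := by
  rintro rfl
  have hzero : (integralMulCLM μ w : C(X, ℝ) → ℝ) = 0 :=
    hΦ.equalizer (map_continuous _) continuous_const
      (funext (integralMulCLM_featureCLM_eq_zero hw))
  exact (integralMulCLM_self_pos μ hw₀).ne' (congrFun hzero w)

end IntegralPairing

section RealPart

variable {X : Type*} [TopologicalSpace X]

/-- Taking real parts, as an operator on continuous functions. -/
noncomputable def reCLM : C(X, ℂ) →L[ℝ] C(X, ℝ) :=
  Complex.reCLM.compLeftContinuous ℝ X

@[simp]
lemma reCLM_apply (F : C(X, ℂ)) (x : X) : reCLM F x = (F x).re := rfl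

lemma reCLM_surjective : Function.Surjective (reCLM : C(X, ℂ) →L[ℝ] C(X, ℝ)) := fun g =>
  ⟨⟨fun x => (g x : ℂ), by fun_prop⟩, by ext x; simp⟩

lemma reCLM_mem_of_mem_span {V : Submodule ℝ C(X, ℝ)} {s : Set C(X, ℂ)}
    (hs : ∀ F ∈ s, ∀ c : ℂ, reCLM (c • F) ∈ V) {F : C(X, ℂ)} (hF : F ∈ Submodule.span ℂ s) :
    ∀ c : ℂ, reCLM (c • F) ∈ V := by
  induction hF using Submodule.span_induction with
  | mem F hF => exact hs F hF
  | zero => simp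
  | add F₁ F₂ _ _ h₁ h₂ =>
    intro c
    rw [smul_add (M := ℂ) (A := C(X, ℂ)), map_add]
    exact V.add_mem (h₁ c) (h₂ c)
  | smul b F _ h =>
    intro c
    rw [smul_smul]
    exact h (c * b)

lemma dense_of_forall_reCLM_smul_mem {V : Submodule ℝ C(X, ℝ)} {s : Set C(X, ℂ)}
    (hdense : Dense (Submodule.span ℂ s : Set C(X, ℂ)))
    (hs : ∀ F ∈ s, ∀ c : ℂ, reCLM (c • F) ∈ V) : Dense (V : Set C(X, ℝ)) := by
  refine (reCLM_surjective.denseRange.dense_image reCLM.continuous hdense).mono ?_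
  rintro _ ⟨F, hF, rfl⟩
  have hmem := reCLM_mem_of_mem_span hs hF 1
  rwa [one_smul] at hmem

end RealPart

section CharacterIntegral

variable {G : Type*} [AddCommGroup G] [MeasurableSpace G] (μ : Measure G)

lemma integral_addChar_eq_zero [MeasurableAdd G] [μ.IsAddRightInvariant]
    {e : AddChar G Circle} (he : e ≠ 0) : ∫ x, (e x : ℂ) ∂μ = 0 := by
  obtain ⟨a, ha⟩ := AddChar.ne_zero_iff.mp he
  have hshift : (∫ x, (e x : ℂ) ∂μ) * e a = ∫ x, (e x : ℂ) ∂μ := by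
    simpa only [AddChar.map_add_eq_mul, Circle.coe_mul, integral_mul_const]
      using integral_add_right_eq_self (μ := μ) (fun x => (e x : ℂ)) a
  by_contra h
  exact ha (Circle.ext ((mul_eq_left₀ h).mp hshift))

lemma integral_addChar_mul_sub [MeasurableAdd G] [MeasurableNeg G] [μ.IsNegInvariant]
    [μ.IsAddLeftInvariant] (e : AddChar G Circle) (ψ : G → ℂ) (x : G) :
    ∫ y, (e y : ℂ) * ψ (x - y) ∂μ = (∫ y, (e (-y) : ℂ) * ψ y ∂μ) * e x := by
  rw [← integral_sub_left_eq_self _ μ x, ← integral_mul_const]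
  refine integral_congr_ae (.of_forall fun y => ?_)
  simp only [sub_sub_cancel]
  rw [sub_eq_neg_add, AddChar.map_add_eq_mul, Circle.coe_mul, mul_right_comm]

end CharacterIntegral

section Character

variable {G : Type*} [AddCommGroup G] [TopologicalSpace G]

/-- A continuous unitary character, as a complex-valued continuous function. -/
noncomputable def charMap (e : AddChar G Circle) (he : Continuous e) : C(G, ℂ) :=
  ⟨fun x => e x, by fun_prop⟩

@[simp]
lemma charMap_apply (e : AddChar G Circle) (he : Continuous e) (x : G) :
    charMap e he x = e x := rfl

section Series

variable [CompactSpace G] {ι : Type*} {χ : ι → AddChar G Circle} (hχ : ∀ n, Continuous (χ n))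

lemma summable_smul_charMap {A : ι → ℂ} (hA : Summable A) :
    Summable fun n => A n • charMap (χ n) (hχ n) := by
  refine hA.norm.of_norm_bounded fun n => (ContinuousMap.norm_le _ (norm_nonneg _)).mpr fun x => ?_
  simp [Circle.norm_coe]

/-- The series `∑ₙ A n • χ n` of characters, as a continuous function; it is meaningful for
summable `A`. -/
noncomputable def charSeries (A : ι → ℂ) : C(G, ℂ) :=
  ∑' n, A n • charMap (χ n) (hχ n)

lemma charSeries_apply {A : ι → ℂ} (hA : Summable A) (x : G) :
    charSeries hχ A x = ∑' n, A n * χ n x :=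
  (ContinuousMap.tsum_apply (summable_smul_charMap hχ hA) x).symm

include hχ in
lemma continuous_of_eq_tsum_addChar {A : ι → ℝ} (hA : Summable A) {ψ : G → ℝ}
    (hψ : ∀ x, (ψ x : ℂ) = ∑' n, (A n : ℂ) * χ n x) : Continuous ψ := by
  have hre : ψ = reCLM (charSeries hχ fun n => A n) := by
    funext x
    rw [reCLM_apply, charSeries_apply hχ (Complex.summable_ofReal.mpr hA), ← hψ,
      Complex.ofReal_re]
  rw [hre]
  exact map_continuous _

variable [IsTopologicalAddGroup G] [MeasurableSpace G] [BorelSpace G] (μ : Measure G)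
  [IsProbabilityMeasure μ] [μ.IsAddLeftInvariant]

lemma integral_neg_mul_charSeries (hinj : Function.Injective χ) {A : ι → ℂ} (hA : Summable A)
    (n : ι) : ∫ y, (χ n (-y) : ℂ) * charSeries hχ A y ∂μ = A n := by
  have hneg : Continuous (-χ n) := (hχ n).comp continuous_neg
  let L := integralMulCLM μ (charMap (-χ n) hneg)
  have hterm (m : ι) : L (A m • charMap (χ m) (hχ m)) = A m * ∫ y, ((χ m - χ n) y : ℂ) ∂μ := by
    simp [L, AddChar.sub_apply, mul_comm]
  calc ∫ y, (χ n (-y) : ℂ) * charSeries hχ A y ∂μ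
      = ∑' m, L (A m • charMap (χ m) (hχ m)) := L.map_tsum (summable_smul_charMap hχ hA)
    _ = L (A n • charMap (χ n) (hχ n)) := tsum_eq_single n fun m hm => by
      rw [hterm, integral_addChar_eq_zero μ (sub_ne_zero.mpr (hinj.ne hm)), mul_zero]
    _ = A n := by simp [hterm]

lemma integral_re_smul_charMap_mul_sub [μ.IsNegInvariant] (hinj : Function.Injective χ)
    {A : ι → ℝ} (hA : Summable A) {ψ : G → ℝ}
    (hψ : ∀ x, (ψ x : ℂ) = ∑' n, (A n : ℂ) * χ n x) (c : ℂ) (n : ι) (x : G) :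
    ∫ y, reCLM (c • charMap (χ n) (hχ n)) y * ψ (x - y) ∂μ =
      A n * reCLM (c • charMap (χ n) (hχ n)) x := by
  have hψcont : Continuous ψ := continuous_of_eq_tsum_addChar hχ hA hψ
  have hψA (y : G) : (ψ y : ℂ) = charSeries hχ (fun m => A m) y := by
    rw [hψ, charSeries_apply hχ (Complex.summable_ofReal.mpr hA)]
  have hconv : ∫ y, c * (χ n y * ψ (x - y)) ∂μ = c * (A n * χ n x) := by
    rw [integral_const_mul, integral_addChar_mul_sub μ (χ n) (fun y => ψ y)]
    simp only [hψA]
    rw [integral_neg_mul_charSeries hχ μ hinj (Complex.summable_ofReal.mpr hA)]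
  have hint : Integrable (fun y => c * (χ n y * ψ (x - y))) μ :=
    integrable_of_continuous μ (by have := hχ n; fun_prop)
  calc ∫ y, reCLM (c • charMap (χ n) (hχ n)) y * ψ (x - y) ∂μ
      = ∫ y, Complex.reCLM (c * (χ n y * ψ (x - y))) ∂μ := by
        refine integral_congr_ae (.of_forall fun y => ?_)
        dsimp only
        rw [← mul_assoc, Complex.reCLM_apply, Complex.re_mul_ofReal]
        rfl
    _ = Complex.reCLM (c * (A n * χ n x)) := by
        rw [Complex.reCLM.integral_comp_comm hint, hconv]
    _ = A n * reCLM (c • charMap (χ n) (hχ n)) x := by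
        rw [mul_left_comm, Complex.reCLM_apply, Complex.re_ofReal_mul]
        rfl

end Series

section StoneWeierstrass

variable {Λ : Type*} [AddCommGroup Λ] {χ : Λ →+ AddChar G Circle} (hχ : ∀ n, Continuous (χ n))

/-- The characters `χ n`, as a monoid homomorphism into `C(G, ℂ)`. -/
noncomputable def charMapHom : Multiplicative Λ →* C(G, ℂ) where
  toFun n := charMap (χ n.toAdd) (hχ n.toAdd)
  map_one' := by ext x; simp
  map_mul' m n := by ext x; simp [AddChar.add_apply]

lemma star_charMapHom (n : Multiplicative Λ) :
    star (charMapHom hχ n) = charMapHom hχ n⁻¹ := by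
  ext x
  simp [charMapHom, AddChar.map_neg_eq_inv, ← Circle.coe_inv_eq_conj]

/-- The trigonometric polynomials: the star subalgebra of `C(G, ℂ)` generated by the
characters `χ n`. -/
noncomputable def charSubalgebra : StarSubalgebra ℂ C(G, ℂ) where
  toSubalgebra := Algebra.adjoin ℂ (Set.range (charMapHom hχ))
  star_mem' := by
    change Algebra.adjoin ℂ (Set.range (charMapHom hχ)) ≤
      star (Algebra.adjoin ℂ (Set.range (charMapHom hχ)))
    refine Algebra.adjoin_le ?_
    rintro _ ⟨n, rfl⟩
    exact Algebra.subset_adjoin ⟨n⁻¹, (star_charMapHom hχ n).symm⟩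

lemma coe_charSubalgebra :
    (charSubalgebra hχ : Set C(G, ℂ)) =
      Submodule.span ℂ (Set.range fun n => charMap (χ n) (hχ n)) := by
  have hspan := Algebra.adjoin_eq_span ℂ (MonoidHom.mrange (charMapHom hχ) : Set C(G, ℂ))
  rw [Submonoid.closure_eq] at hspan
  exact congrArg SetLike.coe hspan

lemma dense_span_charMap [CompactSpace G] (hsep : ∀ x y, (∀ n, χ n x = χ n y) → x = y) :
    Dense (Submodule.span ℂ (Set.range fun n => charMap (χ n) (hχ n)) : Set C(G, ℂ)) := by
  have hsep' : (charSubalgebra hχ).SeparatesPoints := by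
    intro x y hxy
    obtain ⟨n, hn⟩ := not_forall.mp (mt (hsep x y) hxy)
    exact ⟨_, ⟨charMap (χ n) (hχ n), Algebra.subset_adjoin ⟨.ofAdd n, rfl⟩, rfl⟩,
      fun h => hn (Circle.ext h)⟩
  rw [← coe_charSubalgebra, dense_iff_closure_eq, ← StarSubalgebra.topologicalClosure_coe,
    ContinuousMap.starSubalgebra_topologicalClosure_eq_top_of_separatesPoints _ hsep']
  rfl

variable [CompactSpace G] [MeasurableSpace G] {μ : Measure G} [IsFiniteMeasureOnCompacts μ]
  {H : Type*} [NormedAddCommGroup H] [InnerProductSpace ℝ H] [CompleteSpace H]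
  {Φ : C(G, H)} {A : Λ → ℝ}

lemma denseRange_featureCLM_iff [OpensMeasurableSpace G] [μ.IsOpenPosMeasure]
    (hsep : ∀ x y, (∀ n, χ n x = χ n y) → x = y)
    (heig : ∀ (n : Λ) (c : ℂ),
      IsKernelEigenfunction μ Φ (A n) (reCLM (c • charMap (χ n) (hχ n)))) :
    DenseRange (featureCLM Φ) ↔ ∀ n, A n ≠ 0 := by
  refine ⟨fun hdense n => ?_, fun hA => ?_⟩
  · refine eigenvalue_ne_zero_of_denseRange hdense (heig n 1) (DFunLike.ne_iff.mpr ⟨0, ?_⟩)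
    simp
  · refine dense_of_forall_reCLM_smul_mem (V := (featureCLM Φ).range)
      (dense_span_charMap hχ hsep) ?_
    rintro _ ⟨n, rfl⟩ c
    exact mem_range_featureCLM_of_ne_zero (heig n c) (hA n)

end StoneWeierstrass

end Character

theorem stmt9_general {G Λ : Type*} [AddCommGroup G] [TopologicalSpace G]
    [IsTopologicalAddGroup G] [CompactSpace G] [AddCommGroup Λ]
    {χ : Λ →+ AddChar G Circle} (hχ : ∀ n, Continuous (χ n)) (hinj : Function.Injective χ)
    (hsep : ∀ x y, (∀ n, χ n x = χ n y) → x = y)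
    {A : Λ → ℝ} (hA : Summable A)
    {ψ : G → ℝ} (hψ : ∀ x, (ψ x : ℂ) = ∑' n, (A n : ℂ) * χ n x)
    {H : Type*} [NormedAddCommGroup H] [InnerProductSpace ℝ H]
    {Φ : G → H} (hΦ : ∀ x y, ⟪Φ x, Φ y⟫ = ψ (x - y)) :
    IsCUniversal Φ ↔ ∀ n, A n ≠ 0 := by
  borelize G
  let μ : Measure G := Measure.addHaarMeasure ⊤
  have : IsProbabilityMeasure μ := ⟨Measure.addHaarMeasure_self⟩
  have hψcont : Continuous ψ := continuous_of_eq_tsum_addChar hχ hA hψ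
  have hΦcont : Continuous Φ := continuous_of_continuous_inner (by simp only [hΦ]; fun_prop)
  lift Φ to C(G, H) using hΦcont
  rw [isCUniversal_iff_denseRange_featureCLM, ← denseRange_featureCLM_completedFeatureMap]
  refine denseRange_featureCLM_iff (μ := μ) hχ hsep fun n c x => ?_
  simpa only [completedFeatureMap_apply, UniformSpace.Completion.inner_coe, hΦ] using
    integral_re_smul_charMap_mul_sub hχ μ hinj hA hψ c n x

section Torus

variable {d : ℕ}

/-- The characters of the torus indexed by their frequencies; `torusChar` is their
complex-valued form. -/
noncomputable def torusAddChar :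
    (Fin d → ℤ) →+ AddChar (Fin d → AddCircle (2 * Real.pi)) Circle where
  toFun n :=
    { toFun := fun x => ∏ j, AddCircle.toCircle (x j) ^ n j
      map_zero_eq_one' := by simp
      map_add_eq_mul' := fun x y => by
        simp [AddCircle.toCircle_add, mul_zpow, Finset.prod_mul_distrib] }
  map_zero' := by ext x; simp
  map_add' m n := by ext x; simp [AddChar.add_apply, zpow_add, Finset.prod_mul_distrib]

lemma torusAddChar_apply (n : Fin d → ℤ) (x : Fin d → AddCircle (2 * Real.pi)) :
    torusAddChar n x = ∏ j, AddCircle.toCircle (x j) ^ n j := rfl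

lemma coe_torusAddChar (n : Fin d → ℤ) (x : Fin d → AddCircle (2 * Real.pi)) :
    (torusAddChar n x : ℂ) = torusChar n x :=
  map_prod Circle.coeHom _ _

lemma continuous_torusAddChar (n : Fin d → ℤ) : Continuous (torusAddChar n) := by
  change Continuous fun x : Fin d → AddCircle (2 * Real.pi) => ∏ j, AddCircle.toCircle (x j) ^ n j
  exact continuous_finsetProd _ fun j _ =>
    (AddCircle.continuous_toCircle.comp (continuous_apply j)).zpow (n j)

lemma torusAddChar_pi_single (n : Fin d → ℤ) (j : Fin d) (θ : AddCircle (2 * Real.pi)) :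
    torusAddChar n (Pi.single j θ) = AddCircle.toCircle θ ^ n j := by
  rw [torusAddChar_apply, Finset.prod_eq_single j]
  · rw [Pi.single_eq_same]
  · intro i _ hi
    simp [hi]
  · simp

lemma torusAddChar_single_one (j : Fin d) (x : Fin d → AddCircle (2 * Real.pi)) :
    torusAddChar (Pi.single j 1) x = AddCircle.toCircle (x j) := by
  rw [torusAddChar_apply, Finset.prod_eq_single j]
  · simp
  · intro i _ hi
    simp [hi]
  · simp

lemma eq_of_forall_torusAddChar_eq {x y : Fin d → AddCircle (2 * Real.pi)}
    (h : ∀ n, torusAddChar n x = torusAddChar n y) : x = y := by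
  funext j
  apply AddCircle.injective_toCircle Real.two_pi_pos.ne'
  simpa only [torusAddChar_single_one] using h (Pi.single j 1)

lemma toCircle_pi_div_zpow {m : ℤ} (hm : m ≠ 0) :
    AddCircle.toCircle ((Real.pi / m : ℝ) : AddCircle (2 * Real.pi)) ^ m = Circle.exp Real.pi := by
  have hm' : (m : ℝ) ≠ 0 := Int.cast_ne_zero.mpr hm
  rw [← AddCircle.toCircle_zsmul, ← AddCircle.coe_zsmul, zsmul_eq_mul, mul_div_cancel₀ _ hm',
    AddCircle.toCircle_apply_mk, div_self Real.two_pi_pos.ne', one_mul]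

lemma torusAddChar_injective :
    Function.Injective (torusAddChar : (Fin d → ℤ) →+ AddChar _ Circle) := by
  refine (injective_iff_map_eq_zero _).mpr fun n hn => funext fun j => by_contra fun hj => ?_
  have hvalue : Circle.exp Real.pi = 1 := by
    rw [← toCircle_pi_div_zpow hj, ← torusAddChar_pi_single, hn, AddChar.zero_apply]
  norm_num [Circle.ext_iff] at hvalue

end Torus

/-- Let `ψ` be a continuous positive definite function on the `d`-torus
`T^d = (ℝ/2πℤ)^d` with Fourier representation `ψ(x) = ∑_{n∈ℤ^d} A_ψ(n) e^{i xᵀn}`, where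
`A_ψ(n) ≥ 0`, `A_ψ(−n) = A_ψ(n)` and `∑ A_ψ(n) < ∞`, and let `k(x,y) = ψ(x−y)` with
RKHS `H`.  Then `k` is c-universal iff `A_ψ(n) > 0` for all `n ∈ ℤ^d`. -/
theorem stmt9 {d : ℕ}
    (ψ : (Fin d → AddCircle (2 * Real.pi)) → ℝ) (hψcont : Continuous ψ)
    (A : (Fin d → ℤ) → ℝ)
    (hA0 : ∀ n, 0 ≤ A n) (hAsymm : ∀ n, A (-n) = A n) (hAsum : Summable A)
    (hψA : ∀ x, (ψ x : ℂ) = ∑' n : Fin d → ℤ, (A n : ℂ) * torusChar n x)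
    (k : (Fin d → AddCircle (2 * Real.pi)) → (Fin d → AddCircle (2 * Real.pi)) → ℝ)
    (hkψ : ∀ x y, k x y = ψ (x - y))
    {H : Type*} [NormedAddCommGroup H] [InnerProductSpace ℝ H] [CompleteSpace H]
    (T : H →ₗ[ℝ] ((Fin d → AddCircle (2 * Real.pi)) → ℝ)) (hT : Function.Injective T)
    (Φ : (Fin d → AddCircle (2 * Real.pi)) → H)
    (hk : ∀ x y, k x y = ⟪Φ x, Φ y⟫)
    (hrepro : ∀ (f : H) x, T f x = ⟪f, Φ x⟫) :
    (∀ (g : C((Fin d → AddCircle (2 * Real.pi)), ℝ)) (ε : ℝ), 0 < ε →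
        ∃ f : H, ∀ x, |T f x - g x| ≤ ε) ↔
      ∀ n : Fin d → ℤ, 0 < A n := by
  have : Fact (0 < 2 * Real.pi) := ⟨Real.two_pi_pos⟩
  simp only [← coe_torusAddChar] at hψA
  simpa only [IsCUniversal, hrepro, (hA0 _).lt_iff_ne'] using stmt9_general continuous_torusAddChar
    torusAddChar_injective (fun _ _ => eq_of_forall_torusAddChar_eq) hAsum hψA
    fun x y => (hk x y).symm.trans (hkψ x y)
end

section
/- Let X be a locally compact Hausdorff space and let k be a bounded symmetric positive definite kernel on X of the form k(x,y) = ∑_{j∈I} φ_j(x) φ_j(y), where I is a countable index set, each φ_j : X → ℝ is continuous, the series converges uniformly on X × X, and k(·,x) ∈ C_0(X) for all x ∈ X. Then k is c0-universal if and only if for every nonzero μ ∈ M_b(X) there exists some j ∈ I with ∫_X φ_j dμ ≠ 0. -/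
open MeasureTheory Filter Topology RealInnerProductSpace
open scoped ZeroAtInfty

/-- Integral of a vector-valued function with respect to a finite signed measure,
defined via the Jordan decomposition. -/
noncomputable def svInt {X : Type*} [MeasurableSpace X] {E : Type*}
    [NormedAddCommGroup E] [NormedSpace ℝ E]
    (μ : MeasureTheory.SignedMeasure X) (f : X → E) : E :=
  (∫ x, f x ∂μ.toJordanDecomposition.posPart) - ∫ x, f x ∂μ.toJordanDecomposition.negPart

/-!
Write `K x = k(·, x)`. The functions of the form `⟪f, Φ ·⟫` and the span of the `K x` have the same
uniform closure, so `k` is c₀-universal iff the `K x` span a dense subspace of `C₀(X)`. By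
Hahn-Banach and Riesz, the latter means that no nonzero finite signed Radon measure `μ` annihilates
every `K x`. Finally `μ` annihilates every `K x` iff it annihilates every `φ j`: integrating the
expansion of `K x` gives `∫ K x dμ = ∑ j, (∫ φ j dμ) φ j x` uniformly in `x`, and integrating once
more gives `∫∫ k dμ dμ = ∑ j, (∫ φ j dμ)²`.
-/

open scoped NNReal CompactlySupported BoundedContinuousFunction Pointwise

section PositivePart

variable {X : Type*} [TopologicalSpace X]

lemma compactlySupported_Iic_add_Iic (f g : C_c(X, ℝ≥0)) :
    Set.Iic f + Set.Iic g = Set.Iic (f + g) := by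
  refine (Set.Iic_add_Iic_subset f g).antisymm fun h hh => ?_
  obtain ⟨r, hr⟩ := CompactlySupportedContinuousMap.exists_add_of_le (inf_le_left : h ⊓ f ≤ h)
  refine Set.mem_add.2 ⟨h ⊓ f, Set.mem_Iic.2 inf_le_right, r, fun x => ?_, hr⟩
  have hrx : min (h x) (f x) + r x = h x := congr($hr x)
  have hhx : h x ≤ f x + g x := hh x
  change r x ≤ g x
  rcases min_cases (h x) (f x) with ⟨hmin, -⟩ | ⟨hmin, -⟩ <;> rw [hmin] at hrx
  · simp [add_eq_left.1 hrx]
  · exact le_of_add_le_add_left (hrx.trans_le hhx)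

lemma compactlySupported_smul_Iic (c : ℝ≥0) (f : C_c(X, ℝ≥0)) :
    c • Set.Iic f = Set.Iic (c • f) := by
  refine Set.Subset.antisymm ?_ fun g hg => ?_
  · rintro _ ⟨g, hg, rfl⟩
    exact fun x => mul_le_mul_right (hg x) c
  · refine Set.mem_smul_set.2 ⟨c⁻¹ • g, fun x => ?_, ?_⟩
    · exact (mul_le_mul_right (hg x) c⁻¹).trans (inv_mul_le_of_le_mul₀ zero_le zero_le le_rfl)
    · ext x
      have hgx : g x ≤ c * f x := hg x
      rcases eq_or_ne c 0 with rfl | hc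
      · simp [show g x = 0 by simpa using hgx]
      · simp [hc]

/-- The Riesz positive part `f ↦ sup {ℓ g | 0 ≤ g ≤ f}` of an order-bounded functional `ℓ` on the
cone of nonnegative compactly supported functions. -/
noncomputable def conePosPart (ℓ : C_c(X, ℝ≥0) →ₗ[ℝ≥0] ℝ) (hℓ : ∀ f, BddAbove (ℓ '' Set.Iic f)) :
    C_c(X, ℝ≥0) →ₗ[ℝ≥0] ℝ where
  toFun f := sSup (ℓ '' Set.Iic f)
  map_add' f g := by
    rw [← compactlySupported_Iic_add_Iic, Set.image_add,
      csSup_add (Set.nonempty_Iic.image ℓ) (hℓ f) (Set.nonempty_Iic.image ℓ) (hℓ g)]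
  map_smul' c f := by
    rw [← compactlySupported_smul_Iic, Set.image_smul_comm ℓ c _ (map_smul ℓ c)]
    exact Real.sSup_smul_of_nonneg c.coe_nonneg _

variable {ℓ : C_c(X, ℝ≥0) →ₗ[ℝ≥0] ℝ} (hℓ : ∀ f, BddAbove (ℓ '' Set.Iic f))

lemma le_conePosPart (f : C_c(X, ℝ≥0)) : ℓ f ≤ conePosPart ℓ hℓ f :=
  le_csSup (hℓ f) ⟨f, Set.self_mem_Iic, rfl⟩

lemma conePosPart_nonneg (f : C_c(X, ℝ≥0)) : 0 ≤ conePosPart ℓ hℓ f :=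
  le_csSup (hℓ f) ⟨0, fun _ => zero_le, map_zero ℓ⟩

lemma conePosPart_le {f : C_c(X, ℝ≥0)} {a : ℝ} (h : ∀ g ≤ f, ℓ g ≤ a) :
    conePosPart ℓ hℓ f ≤ a :=
  csSup_le (Set.nonempty_Iic.image ℓ) (Set.forall_mem_image.2 h)

end PositivePart

section NNRealValued

variable {M : Type*} [AddCommMonoid M] [Module ℝ≥0 M]

/-- A nonnegative real-valued `ℝ≥0`-linear map, with codomain restricted to `ℝ≥0`. -/
def codRestrictNNReal (ℓ : M →ₗ[ℝ≥0] ℝ) (hℓ : ∀ f, 0 ≤ ℓ f) : M →ₗ[ℝ≥0] ℝ≥0 where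
  toFun f := ⟨ℓ f, hℓ f⟩
  map_add' f g := NNReal.eq (map_add ℓ f g)
  map_smul' c f := NNReal.eq (map_smul ℓ c f)

@[simp]
lemma coe_codRestrictNNReal (ℓ : M →ₗ[ℝ≥0] ℝ) (hℓ : ∀ f, 0 ≤ ℓ f) (f : M) :
    (codRestrictNNReal ℓ hℓ f : ℝ) = ℓ f :=
  rfl

end NNRealValued

section Inclusions

variable {X : Type*} [TopologicalSpace X]

/-- The isometric inclusion of `C₀(X, ℝ)` into the bounded continuous functions. -/
def zeroAtInftyToBCF : C₀(X, ℝ) →ₗᵢ[ℝ] (X →ᵇ ℝ) where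
  toFun := ZeroAtInftyContinuousMap.toBCF
  map_add' _ _ := rfl
  map_smul' _ _ := rfl
  norm_map' _ := rfl

lemma zeroAtInfty_norm_le {g : C₀(X, ℝ)} {C : ℝ} (hC : 0 ≤ C) : ‖g‖ ≤ C ↔ ∀ x, |g x| ≤ C :=
  BoundedContinuousFunction.norm_le (f := zeroAtInftyToBCF g) hC

/-- The inclusion of the cone of nonnegative compactly supported functions into `C₀(X, ℝ)`. -/
noncomputable def coneToZeroAtInfty : C_c(X, ℝ≥0) →ₗ[ℝ≥0] C₀(X, ℝ) where
  toFun f := ⟨f.toReal.toContinuousMap, zero_at_infty f.toReal⟩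
  map_add' f g := by
    ext x
    exact congr($(CompactlySupportedContinuousMap.toReal_add f g) x)
  map_smul' c f := by
    ext x
    exact congr($(CompactlySupportedContinuousMap.toReal_smul c f) x)

@[simp]
lemma coneToZeroAtInfty_apply (f : C_c(X, ℝ≥0)) (x : X) : coneToZeroAtInfty f x = f x :=
  f.toReal_apply x

lemma norm_coneToZeroAtInfty_le {f : C_c(X, ℝ≥0)} {C : ℝ≥0} (h : ∀ x, f x ≤ C) :
    ‖coneToZeroAtInfty f‖ ≤ C :=
  (zeroAtInfty_norm_le C.2).2 fun x => by simpa using h x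

lemma norm_coneToZeroAtInfty_mono {f g : C_c(X, ℝ≥0)} (h : g ≤ f) :
    ‖coneToZeroAtInfty g‖ ≤ ‖coneToZeroAtInfty f‖ :=
  (zeroAtInfty_norm_le (norm_nonneg _)).2 fun x => by
    have hgf : |coneToZeroAtInfty g x| ≤ |coneToZeroAtInfty f x| := by simpa using h x
    exact hgf.trans ((zeroAtInfty_norm_le (norm_nonneg _)).1 le_rfl x)

lemma exists_compactlySupported_eq_toNNReal_sub [R1Space X] (g : C₀(X, ℝ)) {ε : ℝ} (hε : 0 < ε) :
    ∃ f : C_c(X, ℝ≥0), ∀ x, f x = (g x - ε).toNNReal := by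
  obtain ⟨K, hK, hgK⟩ := mem_cocompact.1 ((zero_at_infty g).eventually_lt_const hε)
  refine ⟨⟨⟨fun x => (g x - ε).toNNReal, by fun_prop⟩, ?_⟩, fun x => rfl⟩
  refine HasCompactSupport.intro hK fun x hx => ?_
  exact Real.toNNReal_of_nonpos (sub_nonpos.2 (Set.mem_ofPred.1 (hgK hx)).le)

lemma dense_span_range_coneToZeroAtInfty [R1Space X] :
    Dense (Submodule.span ℝ (Set.range (coneToZeroAtInfty (X := X))) : Set C₀(X, ℝ)) := by
  refine fun g => Metric.mem_closure_iff.2 fun ε hε => ?_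
  obtain ⟨p, hp⟩ := exists_compactlySupported_eq_toNNReal_sub g (half_pos hε)
  obtain ⟨n, hn⟩ := exists_compactlySupported_eq_toNNReal_sub (-g) (half_pos hε)
  refine ⟨coneToZeroAtInfty p - coneToZeroAtInfty n,
    sub_mem (Submodule.subset_span ⟨p, rfl⟩) (Submodule.subset_span ⟨n, rfl⟩), ?_⟩
  rw [dist_eq_norm]
  refine ((zeroAtInfty_norm_le (half_pos hε).le).2 fun x => ?_).trans_lt (half_lt_self hε)
  simp only [ZeroAtInftyContinuousMap.sub_apply, coneToZeroAtInfty_apply, hp, hn,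
    ZeroAtInftyContinuousMap.neg_apply, Real.coe_toNNReal', abs_le]
  grind

end Inclusions

section Radon

variable {X : Type*} [TopologicalSpace X] [T2Space X] [MeasurableSpace X] [BorelSpace X]

lemma innerRegular_of_le {ν ρ : Measure X} [IsFiniteMeasure ρ] [ρ.InnerRegular] (h : ν ≤ ρ) :
    ν.InnerRegular := by
  refine ⟨fun A hA r hr => ?_⟩
  obtain ⟨K, hKA, hK, hAK⟩ := hA.exists_isCompact_sdiff_lt (μ := ρ) (measure_ne_top ρ A)
    (tsub_pos_of_lt hr).ne'
  refine ⟨K, hKA, hK, ?_⟩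
  by_contra! hKr
  refine (lt_irrefl (ν A)) ?_
  calc ν A = ν K + ν (A \ K) := by
        rw [measure_add_sdiff hK.measurableSet.nullMeasurableSet, Set.union_eq_right.2 hKA]
    _ < r + (ν A - r) := ENNReal.add_lt_add_of_le_of_lt
        (ne_top_of_le_ne_top hr.ne_top hKr) hKr ((h _).trans_lt hAK)
    _ = ν A := add_tsub_cancel_of_le hr.le

variable [LocallyCompactSpace X]

lemma isFiniteMeasure_rieszMeasure {Λ : C_c(X, ℝ≥0) →ₗ[ℝ≥0] ℝ≥0} {M : ℝ≥0}
    (h : ∀ f, (∀ x, f x ≤ 1) → Λ f ≤ M) : IsFiniteMeasure (NNRealRMK.rieszMeasure Λ) := by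
  refine ⟨lt_of_le_of_lt ?_ (ENNReal.coe_lt_top (r := M))⟩
  rw [isOpen_univ.measure_eq_iSup_isCompact]
  refine iSup₂_le fun K _ => iSup_le fun hK => ?_
  obtain ⟨f, hf_one, hf_supp, -, hf_mem⟩ :=
    exists_continuousMap_one_of_isCompact_subset_isOpen hK isOpen_univ K.subset_univ
  set g : C_c(X, ℝ≥0) := CompactlySupportedContinuousMap.nnrealPart ⟨f, hf_supp⟩
  have hg : ∀ x, g x = (f x).toNNReal := fun _ => rfl
  calc NNRealRMK.rieszMeasure Λ K = ∫⁻ _ in K, 1 ∂NNRealRMK.rieszMeasure Λ := by simp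
    _ ≤ ∫⁻ x in K, g x ∂NNRealRMK.rieszMeasure Λ :=
      setLIntegral_mono' hK.measurableSet fun _ hx => by simp [hg, hf_one hx]
    _ ≤ ∫⁻ x, g x ∂NNRealRMK.rieszMeasure Λ := setLIntegral_le_lintegral _ _
    _ = Λ g := NNRealRMK.lintegral_rieszMeasure Λ g
    _ ≤ M := ENNReal.coe_le_coe.2 (h g fun x => Real.toNNReal_le_one.2 (hf_mem x).2)

theorem exists_measure_sub_eq (L : C₀(X, ℝ) →L[ℝ] ℝ) :
    ∃ μ ν : Measure X, (IsFiniteMeasure μ ∧ μ.Regular) ∧ (IsFiniteMeasure ν ∧ ν.Regular) ∧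
      ∀ f : C_c(X, ℝ≥0), L (coneToZeroAtInfty f) = ∫ x, (f x : ℝ) ∂μ - ∫ x, (f x : ℝ) ∂ν := by
  let ℓ : C_c(X, ℝ≥0) →ₗ[ℝ≥0] ℝ := (L.toLinearMap.restrictScalars ℝ≥0).comp coneToZeroAtInfty
  have hℓ_abs : ∀ f, |ℓ f| ≤ ‖L‖ * ‖coneToZeroAtInfty f‖ := fun f => L.le_opNorm _
  have hℓ_le : ∀ f, ∀ g ≤ f, ℓ g ≤ ‖L‖ * ‖coneToZeroAtInfty f‖ := fun f g hg =>
    (le_abs_self _).trans <| (hℓ_abs g).trans <| by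
      gcongr
      exact norm_coneToZeroAtInfty_mono hg
  have hℓ : ∀ f, BddAbove (ℓ '' Set.Iic f) := fun f => ⟨_, Set.forall_mem_image.2 (hℓ_le f)⟩
  let P := codRestrictNNReal (conePosPart ℓ hℓ) (conePosPart_nonneg hℓ)
  let N := codRestrictNNReal (conePosPart ℓ hℓ - ℓ) fun f => sub_nonneg.2 (le_conePosPart hℓ f)
  have hPN : ∀ f, ℓ f = P f - N f := fun f => by simp [P, N]
  have hP : ∀ f, (P f : ℝ) ≤ ‖L‖ * ‖coneToZeroAtInfty f‖ := fun f => conePosPart_le hℓ (hℓ_le f)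
  have hN : ∀ f, (N f : ℝ) ≤ 2 * ‖L‖ * ‖coneToZeroAtInfty f‖ := fun f => by
    linarith [hPN f, hP f, neg_le_of_abs_le (hℓ_abs f)]
  refine ⟨NNRealRMK.rieszMeasure P, NNRealRMK.rieszMeasure N,
    ⟨isFiniteMeasure_rieszMeasure (M := ‖L‖₊) fun f hf => ?_, inferInstance⟩,
    ⟨isFiniteMeasure_rieszMeasure (M := 2 * ‖L‖₊) fun f hf => ?_, inferInstance⟩, fun f => ?_⟩
  · exact (hP f).trans (mul_le_of_le_one_right (by positivity) (norm_coneToZeroAtInfty_le hf))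
  · exact (hN f).trans (mul_le_of_le_one_right (by positivity) (norm_coneToZeroAtInfty_le hf))
  · rw [NNRealRMK.integral_rieszMeasure, NNRealRMK.integral_rieszMeasure]
    exact hPN f

end Radon

section SignedIntegral

lemma svInt_toSignedMeasure_sub {X E : Type*} [MeasurableSpace X] [NormedAddCommGroup E]
    [NormedSpace ℝ E] {μ ν : Measure X} [IsFiniteMeasure μ] [IsFiniteMeasure ν] {f : X → E}
    (hμ : Integrable f μ) (hν : Integrable f ν) :
    svInt (μ.toSignedMeasure - ν.toSignedMeasure) f = ∫ x, f x ∂μ - ∫ x, f x ∂ν := by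
  have hadd : (μ - ν) + ν = μ + (ν - μ) := by
    rw [← Measure.toSignedMeasure_eq_toSignedMeasure_iff, Measure.toSignedMeasure_add,
      Measure.toSignedMeasure_add, ← sub_eq_sub_iff_add_eq_add]
    exact Measure.sub_toSignedMeasure_eq_toSignedMeasure_sub.symm
  have hint := congr(∫ x, f x ∂$hadd)
  rw [integral_add_measure (hμ.mono_measure Measure.sub_le) hν,
    integral_add_measure hμ (hν.mono_measure Measure.sub_le)] at hint
  rw [svInt, Measure.toJordanDecomposition_toSignedMeasure_sub]
  exact sub_eq_sub_iff_add_eq_add.2 hint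

lemma totalVariation_toSignedMeasure_sub_le {X : Type*} [MeasurableSpace X] (μ ν : Measure X)
    [IsFiniteMeasure μ] [IsFiniteMeasure ν] :
    (μ.toSignedMeasure - ν.toSignedMeasure).totalVariation ≤ μ + ν := by
  rw [SignedMeasure.totalVariation, Measure.toJordanDecomposition_toSignedMeasure_sub]
  exact add_le_add Measure.sub_le Measure.sub_le

variable {X : Type*} [TopologicalSpace X] [MeasurableSpace X] [BorelSpace X]

/-- Integration against a finite signed measure, as a continuous functional on the bounded
continuous functions. -/
noncomputable def svIntCLM (μ : SignedMeasure X) : (X →ᵇ ℝ) →L[ℝ] ℝ :=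
  LinearMap.mkContinuous
    { toFun := fun f => svInt μ f
      map_add' := fun f g => by
        simp only [svInt, BoundedContinuousFunction.coe_add, Pi.add_apply]
        rw [integral_add (f.integrable _) (g.integrable _),
          integral_add (f.integrable _) (g.integrable _), add_sub_add_comm]
      map_smul' := fun c f => by
        simp only [svInt, BoundedContinuousFunction.coe_smul, integral_smul, smul_sub,
          RingHom.id_apply] }
    (μ.toJordanDecomposition.posPart.real Set.univ + μ.toJordanDecomposition.negPart.real Set.univ)
    fun f => by
      rw [add_mul]
      exact (norm_sub_le _ _).trans
        (add_le_add (f.norm_integral_le_mul_norm _) (f.norm_integral_le_mul_norm _))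

@[simp]
lemma svIntCLM_apply (μ : SignedMeasure X) (f : X →ᵇ ℝ) : svIntCLM μ f = svInt μ f :=
  rfl

variable [T2Space X] [LocallyCompactSpace X]

theorem exists_svIntCLM_comp_eq (L : C₀(X, ℝ) →L[ℝ] ℝ) :
    ∃ μ : SignedMeasure X, μ.totalVariation.InnerRegular ∧
      (svIntCLM μ).comp zeroAtInftyToBCF.toContinuousLinearMap = L := by
  obtain ⟨μ, ν, ⟨_, _⟩, ⟨_, _⟩, hL⟩ := exists_measure_sub_eq L
  refine ⟨μ.toSignedMeasure - ν.toSignedMeasure,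
    innerRegular_of_le (totalVariation_toSignedMeasure_sub_le μ ν),
    ContinuousLinearMap.ext_on dense_span_range_coneToZeroAtInfty ?_⟩
  rintro _ ⟨f, rfl⟩
  let F := zeroAtInftyToBCF (coneToZeroAtInfty f)
  have hF : ⇑F = fun x => (f x : ℝ) := funext (coneToZeroAtInfty_apply f)
  calc svInt (μ.toSignedMeasure - ν.toSignedMeasure) F
      = ∫ x, F x ∂μ - ∫ x, F x ∂ν := svInt_toSignedMeasure_sub (F.integrable μ) (F.integrable ν)
    _ = L (coneToZeroAtInfty f) := by rw [hL, hF]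

theorem svIntCLM_comp_eq_zero_iff {μ : SignedMeasure X} (hμ : μ.totalVariation.InnerRegular) :
    (svIntCLM μ).comp zeroAtInftyToBCF.toContinuousLinearMap = 0 ↔ μ = 0 := by
  constructor
  · intro h
    have : μ.toJordanDecomposition.posPart.InnerRegular :=
      innerRegular_of_le (ρ := μ.totalVariation) (Measure.le_add_right le_rfl)
    have : μ.toJordanDecomposition.negPart.InnerRegular :=
      innerRegular_of_le (ρ := μ.totalVariation) (Measure.le_add_left le_rfl)
    have heq : μ.toJordanDecomposition.posPart = μ.toJordanDecomposition.negPart :=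
      Measure.ext_of_integral_eq_on_compactlySupported fun f =>
        sub_eq_zero.1 (DFunLike.congr_fun h ⟨f.toContinuousMap, zero_at_infty f⟩)
    rw [← μ.toSignedMeasure_toJordanDecomposition, JordanDecomposition.toSignedMeasure]
    simp only [heq, sub_self]
  · rintro rfl
    ext g
    simp [svInt, SignedMeasure.toJordanDecomposition_zero]

end SignedIntegral

section Density

lemma dense_span_iff_forall_clm_eq_zero {𝕜 E : Type*} [RCLike 𝕜] [NormedAddCommGroup E]
    [NormedSpace 𝕜 E] {s : Set E} :
    Dense (Submodule.span 𝕜 s : Set E) ↔ ∀ L : E →L[𝕜] 𝕜, (∀ v ∈ s, L v = 0) → L = 0 := by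
  refine ⟨fun h L hL => ContinuousLinearMap.ext_on h hL, fun h => ?_⟩
  set V := (Submodule.span 𝕜 s).topologicalClosure
  refine Submodule.dense_iff_topologicalClosure_eq_top.2 ((Submodule.eq_top_iff').2 fun x => ?_)
  have : IsClosed (V : Set E) := Submodule.isClosed_topologicalClosure _
  by_contra hx
  obtain ⟨l, hl⟩ := SeparatingDual.exists_ne_zero (R := 𝕜)
    (mt (Submodule.Quotient.mk_eq_zero V).1 hx)
  refine hl (DFunLike.congr_fun (h (l.comp V.mkQL) fun v hv => ?_) x)
  have hvV : v ∈ V := Submodule.le_topologicalClosure _ (Submodule.subset_span hv)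
  simp [(Submodule.Quotient.mk_eq_zero V).2 hvV]

theorem dense_span_iff_forall_svInt {X : Type*} [TopologicalSpace X] [T2Space X]
    [LocallyCompactSpace X] [MeasurableSpace X] [BorelSpace X] {s : Set C₀(X, ℝ)} :
    Dense (Submodule.span ℝ s : Set C₀(X, ℝ)) ↔
      ∀ μ : SignedMeasure X, μ.totalVariation.InnerRegular → (∀ g ∈ s, svInt μ g = 0) → μ = 0 := by
  rw [dense_span_iff_forall_clm_eq_zero]
  constructor
  · intro h μ hμ hs
    exact (svIntCLM_comp_eq_zero_iff hμ).1 (h _ hs)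
  · intro h L hL
    obtain ⟨μ, hμ, rfl⟩ := exists_svIntCLM_comp_eq L
    exact (svIntCLM_comp_eq_zero_iff hμ).2 (h μ hμ hL)

end Density

section FeatureMap

variable {H : Type*} [NormedAddCommGroup H] [InnerProductSpace ℝ H]

lemma exists_mem_forall_abs_inner_sub_le (V : Submodule ℝ H) (f : H) {δ : ℝ} (hδ : 0 < δ) :
    ∃ u ∈ V, ∀ v ∈ V, |⟪u, v⟫ - ⟪f, v⟫| ≤ δ * ‖v‖ := by
  -- `u` approximates the projection of `f` onto the closure of `V` in the completion of `H`.
  let ι : H →ₗᵢ[ℝ] UniformSpace.Completion H := UniformSpace.Completion.toComplₗᵢ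
  let W := (V.map ι.toLinearMap).topologicalClosure
  have hW : ∀ v ∈ V, ι v ∈ W := fun v hv =>
    Submodule.le_topologicalClosure _ (Submodule.mem_map_of_mem hv)
  obtain ⟨_, ⟨u, hu, rfl⟩, hfu⟩ :=
    Metric.mem_closure_iff.1 (W.starProjection_apply_mem (ι f)) δ hδ
  refine ⟨u, hu, fun v hv => ?_⟩
  have hproj : ⟪f, v⟫ = ⟪W.starProjection (ι f), ι v⟫ := by
    rw [← ι.inner_map_map, ← sub_eq_zero, ← inner_sub_left]
    exact W.starProjection_inner_eq_zero (ι f) (ι v) (hW v hv)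
  rw [hproj, ← ι.inner_map_map, ← inner_sub_left, ← ι.norm_map v]
  refine (abs_real_inner_le_norm _ _).trans ?_
  gcongr
  exact (dist_eq_norm' _ _).symm.trans_le hfu.le

variable {X : Type*} [TopologicalSpace X] {Φ : X → H} {K : X → C₀(X, ℝ)}

lemma linearCombination_apply_eq_inner (hK : ∀ x y, K x y = ⟪Φ x, Φ y⟫) (c : X →₀ ℝ) (y : X) :
    Finsupp.linearCombination ℝ K c y = ⟪Finsupp.linearCombination ℝ Φ c, Φ y⟫ := by
  induction c using Finsupp.induction_linear with
  | zero => simp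
  | add c d hc hd => simp [inner_add_left, hc, hd]
  | single x a => simp [real_inner_smul_left, hK]

theorem forall_exists_abs_inner_sub_le_iff_dense {C : ℝ} (hΦ : ∀ x, ‖Φ x‖ ≤ C)
    (hK : ∀ x y, K x y = ⟪Φ x, Φ y⟫) :
    (∀ (g : C₀(X, ℝ)) (ε : ℝ), 0 < ε → ∃ f : H, ∀ x, |⟪f, Φ x⟫ - g x| ≤ ε) ↔
      Dense (Submodule.span ℝ (Set.range K) : Set C₀(X, ℝ)) := by
  constructor
  · refine fun h g => Metric.mem_closure_iff.2 fun ε hε => ?_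
    have hε' : 0 < ε / 3 := by positivity
    obtain ⟨δ, hδ, hCδ⟩ := exists_pos_mul_lt hε' C
    obtain ⟨f, hf⟩ := h g (ε / 3) hε'
    obtain ⟨u, hu, hfu⟩ := exists_mem_forall_abs_inner_sub_le (Submodule.span ℝ (Set.range Φ)) f hδ
    rw [← Finsupp.range_linearCombination] at hu ⊢
    obtain ⟨c, rfl⟩ := hu
    refine ⟨_, ⟨c, rfl⟩, ?_⟩
    rw [dist_eq_norm']
    refine ((zeroAtInfty_norm_le (C := 2 * (ε / 3)) (by positivity)).2 fun x => ?_).trans_lt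
      (by linarith)
    rw [ZeroAtInftyContinuousMap.sub_apply, linearCombination_apply_eq_inner hK]
    calc |⟪Finsupp.linearCombination ℝ Φ c, Φ x⟫ - g x|
        ≤ |⟪Finsupp.linearCombination ℝ Φ c, Φ x⟫ - ⟪f, Φ x⟫| + |⟪f, Φ x⟫ - g x| :=
          abs_sub_le _ _ _
      _ ≤ δ * ‖Φ x‖ + ε / 3 := add_le_add (hfu _ (Submodule.subset_span ⟨x, rfl⟩)) (hf x)
      _ ≤ C * δ + ε / 3 := by
          rw [mul_comm C]
          gcongr
          exact hΦ x
      _ ≤ 2 * (ε / 3) := by linarith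
  · intro h g ε hε
    obtain ⟨_, hu, hgu⟩ := Metric.mem_closure_iff.1 (h g) ε hε
    rw [← Finsupp.range_linearCombination] at hu
    obtain ⟨c, rfl⟩ := hu
    refine ⟨Finsupp.linearCombination ℝ Φ c, fun x => ?_⟩
    rw [dist_eq_norm'] at hgu
    rw [← linearCombination_apply_eq_inner hK]
    exact (zeroAtInfty_norm_le hε.le).1 hgu.le x

end FeatureMap

section MercerExpansion

lemma tendstoUniformly_atTop_iff_dist_le {ι α β : Type*} [Preorder ι] [IsDirectedOrder ι]
    [Nonempty ι] [PseudoMetricSpace β] {F : ι → α → β} {f : α → β} :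
    TendstoUniformly F f atTop ↔ ∀ ε > 0, ∃ i, ∀ j, i ≤ j → ∀ x, dist (F j x) (f x) ≤ ε := by
  simp only [Metric.tendstoUniformly_iff, eventually_atTop, dist_comm (f _)]
  refine ⟨fun h ε hε => ?_, fun h ε hε => ?_⟩
  · obtain ⟨i, hi⟩ := h ε hε
    exact ⟨i, fun j hj x => (hi j hj x).le⟩
  · obtain ⟨i, hi⟩ := h (ε / 2) (half_pos hε)
    exact ⟨i, fun j hj x => (hi j hj x).trans_lt (half_lt_self hε)⟩

lemma tendstoUniformly_boundedContinuousFunction_iff {ι X Y β : Type*} [TopologicalSpace X]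
    [PseudoMetricSpace β] {F : ι → Y → X →ᵇ β} {f : Y → X →ᵇ β} {l : Filter ι} :
    TendstoUniformly F f l ↔
      TendstoUniformly (fun i (p : Y × X) => F i p.1 p.2) (fun p => f p.1 p.2) l := by
  simp only [Metric.tendstoUniformly_iff]
  refine ⟨fun h ε hε => ?_, fun h ε hε => ?_⟩
  · filter_upwards [h ε hε] with i hi p
    exact (BoundedContinuousFunction.dist_coe_le_dist p.2).trans_lt (hi p.1)
  · filter_upwards [h (ε / 2) (half_pos hε)] with i hi y
    exact ((BoundedContinuousFunction.dist_le (half_pos hε).le).2 fun x => (hi (y, x)).le).trans_lt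
      (half_lt_self hε)

lemma abs_le_sqrt_of_hasSum_mul_self {I : Type*} {a : I → ℝ} {s : ℝ}
    (h : HasSum (fun j => a j * a j) s) (j : I) : |a j| ≤ √s :=
  Real.abs_le_sqrt <| (sq (a j)).trans_le <| le_hasSum h j fun i _ => mul_self_nonneg (a i)

variable {X I : Type*} [TopologicalSpace X] {K : X → X →ᵇ ℝ}

theorem forall_clm_eq_zero_iff {φ : I → X →ᵇ ℝ}
    (h : TendstoUniformly (fun (t : Finset I) x => ∑ j ∈ t, φ j x • φ j) K atTop)
    (L : (X →ᵇ ℝ) →L[ℝ] ℝ) : (∀ j, L (φ j) = 0) ↔ ∀ x, L (K x) = 0 := by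
  have hLK : TendstoUniformly (fun (t : Finset I) x => ∑ j ∈ t, φ j x * L (φ j))
      (fun x => L (K x)) atTop := by
    simpa [Function.comp_def, map_sum] using L.uniformContinuous.comp_tendstoUniformly h
  constructor
  · intro hφ x
    exact tendsto_nhds_unique (hLK.tendsto_at x) (by simp [hφ])
  · intro hK j
    have hsum : HasSum (fun j => L (φ j) • φ j) 0 := by
      refine BoundedContinuousFunction.tendsto_iff_tendstoUniformly.2 ?_
      simpa [hK, mul_comm, Finset.sum_fn, Pi.zero_def] using hLK
    have hsq : HasSum (fun j => L (φ j) * L (φ j)) 0 := by simpa using hsum.mapL L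
    exact mul_self_eq_zero.1
      (congr_fun ((hasSum_zero_iff_of_nonneg fun j => mul_self_nonneg _).1 hsq) j)

theorem forall_svInt_eq_zero_iff [MeasurableSpace X] [BorelSpace X] {φ : I → X → ℝ}
    (hφ : ∀ j, Continuous (φ j))
    (h : TendstoUniformly (fun (t : Finset I) (p : X × X) => ∑ j ∈ t, φ j p.1 * φ j p.2)
      (fun p => K p.1 p.2) atTop)
    {C : ℝ} (hC : ∀ x, K x x ≤ C) (μ : SignedMeasure X) :
    (∀ j, svInt μ (φ j) = 0) ↔ ∀ x, svInt μ (K x) = 0 := by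
  let ψ : I → X →ᵇ ℝ := fun j => .ofNormedAddCommGroup (φ j) (hφ j) (√C) fun x =>
    (abs_le_sqrt_of_hasSum_mul_self (h.tendsto_at (x, x)) j).trans (Real.sqrt_le_sqrt (hC x))
  have hψ : TendstoUniformly (fun (t : Finset I) x => ∑ j ∈ t, ψ j x • ψ j) K atTop := by
    rw [tendstoUniformly_boundedContinuousFunction_iff]
    simpa [ψ] using h
  exact forall_clm_eq_zero_iff hψ (svIntCLM μ)

end MercerExpansion

theorem stmt11_general
    {X : Type*} [TopologicalSpace X] [T2Space X] [LocallyCompactSpace X]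
    [MeasurableSpace X] [BorelSpace X] {I : Type*}
    (φ : I → X → ℝ) (hφcont : ∀ j, Continuous (φ j))
    (k : X → X → ℝ)
    (hkφ : ∀ ε : ℝ, 0 < ε → ∃ s : Finset I, ∀ t : Finset I, s ⊆ t →
      ∀ x y : X, |(∑ j ∈ t, φ j x * φ j y) - k x y| ≤ ε)
    (hkbdd : ∃ C : ℝ, ∀ x y : X, |k x y| ≤ C)
    (hkC0 : ∀ x : X, Continuous (fun y => k y x) ∧
      Tendsto (fun y => k y x) (cocompact X) (𝓝 0))
    {H : Type*} [NormedAddCommGroup H] [InnerProductSpace ℝ H]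
    (Φ : X → H) (hk : ∀ x y : X, k x y = ⟪Φ x, Φ y⟫) :
    (∀ (g : C₀(X, ℝ)) (ε : ℝ), 0 < ε → ∃ f : H, ∀ x : X, |⟪f, Φ x⟫ - g x| ≤ ε) ↔
      ∀ μ : SignedMeasure X, μ.totalVariation.InnerRegular → μ ≠ 0 →
        ∃ j : I, svInt μ (φ j) ≠ 0 := by
  obtain ⟨C, hC⟩ := hkbdd
  have hkC : ∀ x, k x x ≤ C := fun x => (le_abs_self _).trans (hC x x)
  let K : X → C₀(X, ℝ) := fun x => ⟨⟨fun y => k y x, (hkC0 x).1⟩, (hkC0 x).2⟩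
  have hsum : TendstoUniformly (fun (t : Finset I) (p : X × X) => ∑ j ∈ t, φ j p.1 * φ j p.2)
      (fun p => k p.2 p.1) atTop :=
    tendstoUniformly_atTop_iff_dist_le.2 fun ε hε => (hkφ ε hε).imp fun s hs t ht p => by
      simpa only [Real.dist_eq, mul_comm] using hs t ht p.2 p.1
  have hφK : ∀ μ : SignedMeasure X, (∀ j, svInt μ (φ j) = 0) ↔ ∀ x, svInt μ (K x) = 0 :=
    forall_svInt_eq_zero_iff (K := fun x => zeroAtInftyToBCF (K x)) hφcont hsum hkC
  have hΦ : ∀ x, ‖Φ x‖ ≤ √C := fun x => Real.le_sqrt_of_sq_le <| by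
    rw [← real_inner_self_eq_norm_sq, ← hk]
    exact hkC x
  have hK : ∀ x y, K x y = ⟪Φ x, Φ y⟫ := fun x y => (hk y x).trans (real_inner_comm _ _)
  rw [forall_exists_abs_inner_sub_le_iff_dense hΦ hK, dense_span_iff_forall_svInt]
  refine forall₂_congr fun μ _ => ?_
  rw [Set.forall_mem_range, ← hφK, ← not_imp_not, not_forall]

/-- Let `X` be a locally compact Hausdorff space and let
`k(x,y) = ∑_{j∈I} φ_j(x) φ_j(y)` be a bounded symmetric positive definite kernel, where
`I` is countable, each `φ_j` is continuous, the series converges uniformly on `X × X`,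
and `k(·,x) ∈ C₀(X)` for all `x`; let `H` be the RKHS of `k`.  Then `k` is c₀-universal
iff for every nonzero finite signed Radon measure `μ` on `X` there is some `j ∈ I` with
`∫ φ_j dμ ≠ 0`. -/
theorem stmt11
    {X : Type*} [TopologicalSpace X] [T2Space X] [LocallyCompactSpace X]
    [MeasurableSpace X] [BorelSpace X]
    {I : Type*} [Countable I]
    (φ : I → X → ℝ) (hφcont : ∀ j, Continuous (φ j))
    (k : X → X → ℝ)
    (hkφ : ∀ ε : ℝ, 0 < ε → ∃ s : Finset I, ∀ t : Finset I, s ⊆ t →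
      ∀ x y : X, |(∑ j ∈ t, φ j x * φ j y) - k x y| ≤ ε)
    (hkbdd : ∃ C : ℝ, ∀ x y : X, |k x y| ≤ C)
    (hkC0 : ∀ x : X, Continuous (fun y => k y x) ∧
      Tendsto (fun y => k y x) (cocompact X) (𝓝 0))
    {H : Type*} [NormedAddCommGroup H] [InnerProductSpace ℝ H] [CompleteSpace H]
    (T : H →ₗ[ℝ] (X → ℝ)) (hT : Function.Injective T)
    (Φ : X → H)
    (hk : ∀ x y : X, k x y = ⟪Φ x, Φ y⟫)
    (hrepro : ∀ (f : H) (x : X), T f x = ⟪f, Φ x⟫) :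
    (∀ (g : C₀(X, ℝ)) (ε : ℝ), 0 < ε → ∃ f : H, ∀ x : X, |T f x - g x| ≤ ε) ↔
      ∀ μ : MeasureTheory.SignedMeasure X, μ.totalVariation.InnerRegular → μ ≠ 0 →
        ∃ j : I, svInt μ (φ j) ≠ 0 := by
  simpa only [hrepro] using stmt11_general φ hφcont k hkφ hkbdd hkC0 Φ hk
end

section
/- Let r ∈ (0,∞], let X := {x ∈ ℝ^d : ‖x‖₂ < √r}, and let f(t) = ∑_{n=0}^∞ a_n t^n for t ∈ (−r, r). If a_n > 0 for all n ≥ 0, then the kernel k(x,y) = f(xᵀy), x, y ∈ X, is c-universal on every compact subset of X, i.e., for every compact Z ⊆ X the restriction of the RKHS of k to Z is dense in C(Z) with respect to the uniform norm. -/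
open MeasureTheory Filter Topology RealInnerProductSpace
open scoped ENNReal

/-!
The kernel section at `t • y` is `∑ n, tⁿ • aₙ ⟪y, ·⟫ⁿ`, a power series in `t` which converges
uniformly on `Z` for small `t`. Its values lie in the closure of the restricted RKHS; so do its
coefficients, hence all powers `⟪y, ·⟫ⁿ`, because `aₙ ≠ 0`. Then so do the exponentials
`exp ⟪y, ·⟫`, which separate points and are closed under multiplication, so that the
Stone–Weierstrass theorem applies to their linear span.
-/

theorem eventually_ofReal_lt_of_continuousAt {Y : Type*} [TopologicalSpace Y] {r : ℝ≥0∞}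
    {φ : Y → ℝ} {x : Y} (hφ : ContinuousAt φ x) (hx : ENNReal.ofReal (φ x) < r) :
    ∀ᶠ y in 𝓝 x, ENNReal.ofReal (φ y) < r :=
  (ENNReal.continuous_ofReal.continuousAt.comp hφ).eventually_lt continuousAt_const hx

section PowerSeries

variable {𝕜 : Type*} [NontriviallyNormedField 𝕜]

theorem coeff_mem_of_eventually_hasSum_pow_smul {E : Type*} [NormedAddCommGroup E]
    [NormedSpace 𝕜 E] {A : Submodule 𝕜 E} (hA : IsClosed (A : Set E)) {v : ℕ → E}
    (hv : ∀ᶠ t in 𝓝 (0 : 𝕜), ∃ u ∈ A, HasSum (fun n => t ^ n • v n) u) (n : ℕ) : v n ∈ A := by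
  -- Modulo `A` the series is the power series of the zero function.
  have : IsClosed (A : Set E) := hA
  let p : FormalMultilinearSeries 𝕜 𝕜 (E ⧸ A) := fun n =>
    ContinuousMultilinearMap.mkPiRing 𝕜 (Fin n) (A.mkQ (v n))
  have hcoeff : ∀ n, p.coeff n = A.mkQ (v n) := fun n => by
    simp [p, FormalMultilinearSeries.coeff]
  have hp : HasFPowerSeriesAt (fun _ : 𝕜 => (0 : E ⧸ A)) p 0 := by
    rw [hasFPowerSeriesAt_iff]
    filter_upwards [hv] with t ⟨u, hu, hsum⟩
    have hu₀ : A.mkQL u = 0 := by simpa using hu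
    simpa [hcoeff, hu₀] using hsum.mapL A.mkQL
  have hn : A.mkQ (v n) = 0 := by
    rw [← hcoeff n, hp.eq_zero, FormalMultilinearSeries.coeff, FormalMultilinearSeries.zero_apply,
      zero_apply]
  simpa only [Submodule.mkQ_apply, Submodule.Quotient.mk_eq_zero] using hn

theorem pow_mem_of_eventually_hasSum_smul_pow {B : Type*} [NormedRing B] [NormedAlgebra 𝕜 B]
    {A : Submodule 𝕜 B} (hA : IsClosed (A : Set B)) {a : ℕ → 𝕜} {b : B}
    (hb : ∀ᶠ t in 𝓝 (0 : 𝕜), ∃ u ∈ A, HasSum (fun n => a n • (t • b) ^ n) u) {n : ℕ}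
    (hn : a n ≠ 0) : b ^ n ∈ A := by
  have hcoeff : a n • b ^ n ∈ A := by
    refine coeff_mem_of_eventually_hasSum_pow_smul hA (v := fun n => a n • b ^ n) ?_ n
    simpa only [smul_pow, smul_comm (_ : 𝕜) (_ : 𝕜) (_ : B)] using hb
  exact (A.smul_mem_iff hn).mp hcoeff

theorem summable_smul_pow_of_summable_norm {B : Type*} [NormedRing B] [NormedAlgebra 𝕜 B]
    [CompleteSpace B] {a : ℕ → 𝕜} {b : B} (h : Summable fun n => ‖a n‖ * ‖b‖ ^ n) :
    Summable fun n => a n • b ^ n := by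
  refine .of_norm_bounded_eventually_nat h ?_
  filter_upwards [eventually_gt_atTop 0] with n hn
  rw [norm_smul]
  gcongr
  exact norm_pow_le' b hn

theorem exp_mem_of_forall_pow_mem [CharZero 𝕜] [ContinuousSMul ℚ 𝕜] {B : Type*} [NormedRing B]
    [NormedAlgebra 𝕜 B] [CompleteSpace B] {A : Submodule 𝕜 B} (hA : IsClosed (A : Set B)) {b : B}
    (hb : ∀ n, b ^ n ∈ A) : NormedSpace.exp b ∈ A :=
  hA.mem_of_tendsto (NormedSpace.exp_series_hasSum_exp' (𝕂 := 𝕜) b)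
    (Eventually.of_forall fun _ => A.sum_mem fun n _ => A.smul_mem _ (hb n))

end PowerSeries

section CompactSpace

variable {Y : Type*} [TopologicalSpace Y] [CompactSpace Y]

theorem continuousMap_exp_apply (φ : C(Y, ℝ)) (x : Y) :
    NormedSpace.exp φ x = Real.exp (φ x) := by
  rw [Real.exp_eq_exp_ℝ]
  exact NormedSpace.map_exp (ContinuousMap.evalAlgHom ℝ ℝ x) (continuous_eval_const x) φ

theorem exists_hasSum_smul_pow {a : ℕ → ℝ} {f : ℝ → ℝ} {φ : C(Y, ℝ)}
    (hf : ∀ t, |t| ≤ ‖φ‖ → HasSum (fun n => a n * t ^ n) (f t)) :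
    ∃ u : C(Y, ℝ), (∀ x, u x = f (φ x)) ∧ HasSum (fun n => a n • φ ^ n) u := by
  have hsummable : Summable fun n => a n • φ ^ n := by
    refine summable_smul_pow_of_summable_norm ?_
    simpa only [norm_mul, norm_pow, Real.norm_eq_abs, abs_norm] using
      (hf ‖φ‖ (abs_norm φ).le).summable.norm
  refine ⟨_, fun x => ?_, hsummable.hasSum⟩
  have hx : HasSum (fun n => a n * φ x ^ n) ((∑' n, a n • φ ^ n) x) :=
    hsummable.hasSum.mapL (ContinuousMap.evalCLM ℝ x)
  exact hx.unique (hf _ (φ.norm_coe_le_norm x))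

theorem eq_top_of_submonoid_subset {A : Submodule ℝ C(Y, ℝ)}
    (hA : IsClosed (A : Set C(Y, ℝ))) {M : Submonoid C(Y, ℝ)}
    (hM : ∀ ⦃x z⦄, x ≠ z → ∃ φ ∈ M, φ x ≠ φ z) (hMA : (M : Set C(Y, ℝ)) ⊆ A) : A = ⊤ := by
  let S : Subalgebra ℝ C(Y, ℝ) := Algebra.adjoin ℝ M
  have hSA : Subalgebra.toSubmodule S ≤ A := by
    rwa [Algebra.adjoin_toSubmodule_le, Submonoid.closure_eq]
  have hS : S.SeparatesPoints := fun x z hxz => by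
    obtain ⟨φ, hφ, hne⟩ := hM hxz
    exact ⟨φ, ⟨φ, Algebra.subset_adjoin hφ, rfl⟩, hne⟩
  refine eq_top_iff.mpr fun g _ => closure_minimal hSA hA ?_
  exact ContinuousMap.continuousMap_mem_subalgebra_closure_of_separatesPoints S hS g

-- The exponentials of elements of `V` form a submonoid, so no polarization is needed to produce
-- products of distinct elements of `V` from powers.
theorem eq_top_of_forall_pow_mem {A : Submodule ℝ C(Y, ℝ)} (hA : IsClosed (A : Set C(Y, ℝ)))
    {V : AddSubmonoid C(Y, ℝ)} (hV : ∀ ⦃x z⦄, x ≠ z → ∃ φ ∈ V, φ x ≠ φ z)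
    (hpow : ∀ φ ∈ V, ∀ n, φ ^ n ∈ A) : A = ⊤ := by
  let M : Submonoid C(Y, ℝ) :=
    { carrier := NormedSpace.exp '' V
      one_mem' := ⟨0, V.zero_mem, NormedSpace.exp_zero⟩
      mul_mem' := by
        rintro _ _ ⟨φ, hφ, rfl⟩ ⟨ψ, hψ, rfl⟩
        refine ⟨φ + ψ, V.add_mem hφ hψ, ?_⟩
        ext x
        simp only [continuousMap_exp_apply, ContinuousMap.add_apply, ContinuousMap.mul_apply,
          Real.exp_add] }
  refine eq_top_of_submonoid_subset hA (M := M) (fun x z hxz => ?_) ?_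
  · obtain ⟨φ, hφ, hne⟩ := hV hxz
    refine ⟨NormedSpace.exp φ, ⟨φ, hφ, rfl⟩, ?_⟩
    simpa only [continuousMap_exp_apply, ne_eq, Real.exp_eq_exp] using hne
  · rintro _ ⟨φ, hφ, rfl⟩
    exact exp_mem_of_forall_pow_mem hA (hpow φ hφ)

end CompactSpace

section FeatureMap

variable {Y E H : Type*} [TopologicalSpace Y] [NormedAddCommGroup E] [InnerProductSpace ℝ E]
  [NormedAddCommGroup H] [InnerProductSpace ℝ H]

/-- The linear functionals `⟪y, ·⟫` of an inner product space, pulled back along a continuous map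
`i` and depending linearly on `y`. -/
noncomputable def innerContinuousMap (i : C(Y, E)) : E →ₗ[ℝ] C(Y, ℝ) where
  toFun y := ⟨fun x => ⟪y, i x⟫, by fun_prop⟩
  map_add' y z := ContinuousMap.ext fun x => inner_add_left y z (i x)
  map_smul' t y := ContinuousMap.ext fun x => real_inner_smul_left y (i x) t

theorem exists_innerContinuousMap_ne {i : C(Y, E)} (hi : Function.Injective i) {x z : Y}
    (hxz : x ≠ z) : ∃ y, innerContinuousMap i y x ≠ innerContinuousMap i y z := by
  by_contra! h
  exact hxz (hi (ext_inner_left ℝ h))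

/-- The continuous functions of the form `x ↦ ⟪h, Φ x⟫` with `h` in the feature space: those
elements of the RKHS with feature map `Φ` that are continuous. No continuity of `Φ` is assumed, so
continuity is imposed on the functions themselves. -/
def continuousFeatureFunctions (Φ : Y → H) : Submodule ℝ C(Y, ℝ) where
  carrier := {u | ∃ h : H, ∀ x, ⟪h, Φ x⟫ = u x}
  zero_mem' := ⟨0, fun x => inner_zero_left (Φ x)⟩
  add_mem' := by
    rintro u v ⟨h, hu⟩ ⟨l, hv⟩
    exact ⟨h + l, fun x => by rw [inner_add_left, hu, hv, ContinuousMap.add_apply]⟩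
  smul_mem' := by
    rintro c u ⟨h, hu⟩
    exact ⟨c • h, fun x => by rw [real_inner_smul_left, hu, ContinuousMap.smul_apply, smul_eq_mul]⟩

end FeatureMap

section TaylorKernel

variable {Y E H : Type*} [TopologicalSpace Y] [CompactSpace Y]
  [NormedAddCommGroup E] [InnerProductSpace ℝ E] [NormedAddCommGroup H] [InnerProductSpace ℝ H]
  {a : ℕ → ℝ} {f : ℝ → ℝ}

theorem eventually_hasSum_smul_pow_innerContinuousMap
    (hf : ∀ᶠ t in 𝓝 (0 : ℝ), HasSum (fun n => a n * t ^ n) (f t)) {i : C(Y, E)} {Φ : Y → H}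
    (hΦ : ∀ᶠ y in 𝓝 (0 : E), ∃ h : H, ∀ x, ⟪h, Φ x⟫ = f ⟪y, i x⟫) (y : E) :
    ∀ᶠ t in 𝓝 (0 : ℝ), ∃ u ∈ continuousFeatureFunctions Φ,
      HasSum (fun n => a n • (t • innerContinuousMap i y) ^ n) u := by
  obtain ⟨δ, hδ, hf⟩ := Metric.eventually_nhds_iff.mp hf
  have hsmall : ∀ᶠ t in 𝓝 (0 : ℝ), ‖t • innerContinuousMap i y‖ < δ :=
    ContinuousAt.eventually_lt (by fun_prop) continuousAt_const (by simpa using hδ)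
  have hline : Tendsto (fun t : ℝ => t • y) (𝓝 0) (𝓝 0) :=
    Continuous.tendsto' (by fun_prop) 0 0 (zero_smul ℝ y)
  filter_upwards [hsmall, hline.eventually hΦ] with t ht ⟨h, hh⟩
  obtain ⟨u, hu, hsum⟩ := exists_hasSum_smul_pow (φ := t • innerContinuousMap i y) fun s hs =>
    hf (by simpa only [dist_zero_right, Real.norm_eq_abs] using hs.trans_lt ht)
  refine ⟨u, ⟨h, fun x => ?_⟩, hsum⟩
  rw [hh, hu, ← map_smul]
  rfl

theorem topologicalClosure_continuousFeatureFunctions_eq_top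
    (ha : ∀ n, a n ≠ 0) (hf : ∀ᶠ t in 𝓝 (0 : ℝ), HasSum (fun n => a n * t ^ n) (f t))
    {i : C(Y, E)} (hi : Function.Injective i) {Φ : Y → H}
    (hΦ : ∀ᶠ y in 𝓝 (0 : E), ∃ h : H, ∀ x, ⟪h, Φ x⟫ = f ⟪y, i x⟫) :
    (continuousFeatureFunctions Φ).topologicalClosure = ⊤ := by
  have hclosed := (continuousFeatureFunctions Φ).isClosed_topologicalClosure
  have hpow : ∀ y n,
      innerContinuousMap i y ^ n ∈ (continuousFeatureFunctions Φ).topologicalClosure := fun y n =>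
    pow_mem_of_eventually_hasSum_smul_pow hclosed
      ((eventually_hasSum_smul_pow_innerContinuousMap hf hΦ y).mono
        fun _ ⟨u, hu, hsum⟩ => ⟨u, Submodule.le_topologicalClosure _ hu, hsum⟩) (ha n)
  refine eq_top_of_forall_pow_mem hclosed
    (V := (LinearMap.range (innerContinuousMap i)).toAddSubmonoid) (fun x z hxz => ?_) ?_
  · obtain ⟨y, hne⟩ := exists_innerContinuousMap_ne hi hxz
    exact ⟨_, ⟨y, rfl⟩, hne⟩
  · rintro _ ⟨y, rfl⟩ n
    exact hpow y n

theorem stmt12_general (ha : ∀ n, a n ≠ 0)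
    (hf : ∀ᶠ t in 𝓝 (0 : ℝ), HasSum (fun n => a n * t ^ n) (f t))
    {X : Set E} (hX : X ∈ 𝓝 0) {Φ : X → H} (hΦ : ∀ x y, ⟪Φ x, Φ y⟫ = f ⟪(x : E), (y : E)⟫)
    {Z : Set X} (hZ : IsCompact Z) (g : C(Z, ℝ)) {ε : ℝ} (hε : 0 < ε) :
    ∃ h : H, ∀ x : Z, |⟪h, Φ x⟫ - g x| ≤ ε := by
  have : CompactSpace Z := isCompact_iff_compactSpace.mp hZ
  let i : C(Z, E) := ⟨fun x => x, by fun_prop⟩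
  have hi : Function.Injective i := Subtype.val_injective.comp Subtype.val_injective
  have hsection : ∀ᶠ y in 𝓝 (0 : E), ∃ h : H, ∀ x : Z, ⟪h, Φ x⟫ = f ⟪y, i x⟫ := by
    filter_upwards [hX] with y hy
    exact ⟨Φ ⟨y, hy⟩, fun x => hΦ _ _⟩
  have hg : g ∈ (continuousFeatureFunctions fun x : Z => Φ x).topologicalClosure :=
    topologicalClosure_continuousFeatureFunctions_eq_top ha hf hi hsection ▸ Submodule.mem_top
  obtain ⟨u, ⟨h, hu⟩, hdist⟩ := Metric.mem_closure_iff.mp hg ε hε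
  refine ⟨h, fun x => ?_⟩
  calc |⟪h, Φ x⟫ - g x| = dist (g x) (u x) := by rw [hu, dist_comm, Real.dist_eq]
    _ ≤ dist g u := ContinuousMap.dist_apply_le_dist x
    _ ≤ ε := hdist.le

end TaylorKernel

/-- Let `r ∈ (0,∞]`, `X := {x ∈ ℝᵈ : ‖x‖ < √r}` and
`f(t) = ∑_{n=0}^∞ aₙ tⁿ` for `t ∈ (−r,r)`.  If `aₙ > 0` for all `n`, then the Taylor
kernel `k(x,y) = f(xᵀy)` on `X` (with RKHS `H`) is c-universal on every compact subset
`Z ⊆ X`, i.e. the restriction of `H` to `Z` is uniformly dense in `C(Z)`. -/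
theorem stmt12 {d : ℕ} (r : ℝ≥0∞) (hr : 0 < r)
    (a : ℕ → ℝ) (ha : ∀ n, 0 < a n)
    (f : ℝ → ℝ)
    (hf : ∀ t : ℝ, ENNReal.ofReal |t| < r → HasSum (fun n => a n * t ^ n) (f t))
    (k : {x : EuclideanSpace ℝ (Fin d) // ENNReal.ofReal (‖x‖ ^ 2) < r} →
         {x : EuclideanSpace ℝ (Fin d) // ENNReal.ofReal (‖x‖ ^ 2) < r} → ℝ)
    (hkf : ∀ x y, k x y = f ⟪(x : EuclideanSpace ℝ (Fin d)), (y : EuclideanSpace ℝ (Fin d))⟫)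
    {H : Type*} [NormedAddCommGroup H] [InnerProductSpace ℝ H] [CompleteSpace H]
    (T : H →ₗ[ℝ] ({x : EuclideanSpace ℝ (Fin d) // ENNReal.ofReal (‖x‖ ^ 2) < r} → ℝ))
    (hT : Function.Injective T)
    (Φ : {x : EuclideanSpace ℝ (Fin d) // ENNReal.ofReal (‖x‖ ^ 2) < r} → H)
    (hk : ∀ x y, k x y = ⟪Φ x, Φ y⟫)
    (hrepro : ∀ (g : H) x, T g x = ⟪g, Φ x⟫) :
    ∀ (Z : Set {x : EuclideanSpace ℝ (Fin d) // ENNReal.ofReal (‖x‖ ^ 2) < r}),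
      IsCompact Z → ∀ (g : C(Z, ℝ)) (ε : ℝ), 0 < ε →
        ∃ fH : H, ∀ x : Z, |T fH (x : {x : EuclideanSpace ℝ (Fin d) // ENNReal.ofReal (‖x‖ ^ 2) < r}) - g x| ≤ ε := by
  intro Z hZ g ε hε
  simpa only [hrepro] using stmt12_general (fun n => (ha n).ne')
    ((eventually_ofReal_lt_of_continuousAt (by fun_prop) (by simpa using hr)).mono hf)
    (eventually_ofReal_lt_of_continuousAt (by fun_prop) (by simpa using hr))
    (fun x y => (hk x y).symm.trans (hkf x y)) hZ g hε
end
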